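/- Let q be a real number that is transcendental over ℚ. Let A, B, C be three non-collinear points in the Euclidean plane with dist(A,B) = dist(A,C) = l and dist(B,C) = b, such that dist(A,M) = q where M is the midpoint of BC, and such that dist(B,P) = 1 where P is the point on the segment from A to C with dist(C,P) = b·l/(b + l). Then the ratio l/b does not belong to any subfield Kₙ ⊆ ℝ arising as the top of a finite tower ℚ(q) = K₀ ⊆ K₁ ⊆ ⋯ ⊆ Kₙ of subfields of ℝ with [Kᵢ : Kᵢ₋₁] = 2 for every i = 1, …, n. -/

import Mathlib

set_option autoImplicit false
set_option synthInstance.maxHeartbeats 400000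

/-- The ratio `t = l / b` of an isosceles triangle whose bisector from a base vertex has length `1`
satisfies a cubic equation whose coefficients are determined by the bisector `q` from the apex. -/
theorem isosceles_ratio_cubic {q l b : ℝ} {A B C P : EuclideanSpace ℝ (Fin 2)}
    (hBne : B ≠ C) (hAB : dist A B = l) (hAC : dist A C = l) (hBC : dist B C = b)
    (hAM : dist A (midpoint ℝ B C) = q)
    (hP : P ∈ segment ℝ A C) (hCP : dist C P = b * l / (b + l)) (hBP : dist B P = 1) :
    2 * (l / b) ^ 3 + 3 * (l / b) ^ 2 - 4 * q ^ 2 * (l / b) - 1 = 0 := by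
  have hb : 0 < b := hBC ▸ dist_pos.2 hBne
  have hl : 0 < l := by
    have := dist_triangle_left B C A
    linarith
  obtain ⟨x, y, hx, hy, hxy, rfl⟩ := hP
  obtain rfl : x = 1 - y := by linarith
  have dist_sq (X Y : EuclideanSpace ℝ (Fin 2)) :
      dist X Y ^ 2 = (X 0 - Y 0) ^ 2 + (X 1 - Y 1) ^ 2 := by
    rw [EuclideanSpace.dist_sq_eq, Fin.sum_univ_two, Real.dist_eq, Real.dist_eq, sq_abs, sq_abs]
  have hAB' := dist_sq A B
  have hAC' := dist_sq A C
  have hBC' := dist_sq B C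
  have hAM' := dist_sq A (midpoint ℝ B C)
  have hCP' := dist_sq C ((1 - y) • A + y • C)
  have hBP' := dist_sq B ((1 - y) • A + y • C)
  rw [hAB] at hAB'
  rw [hAC] at hAC'
  rw [hBC] at hBC'
  rw [hAM] at hAM'
  rw [hCP] at hCP'
  rw [hBP] at hBP'
  simp only [midpoint_eq_smul_add, PiLp.add_apply, PiLp.smul_apply, smul_eq_mul,
    invOf_eq_inv] at hAM' hCP' hBP'
  have hk : 1 - y = b / (b + l) := by
    have hsq : ((1 - y) * l) ^ 2 = (b * l / (b + l)) ^ 2 := by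
      rw [mul_pow, hAC', hCP']
      ring
    have hroot := (sq_eq_sq₀ (by positivity) (by positivity)).1 hsq
    field_simp at hroot ⊢
    linarith
  have hq2 : q ^ 2 = l ^ 2 - b ^ 2 / 4 := by
    linear_combination hAM' - hAB' / 2 - hAC' / 2 + hBC' / 4
  have hp : 1 = b ^ 2 - (1 - y) * b ^ 2 + (1 - y) ^ 2 * l ^ 2 := by
    linear_combination hBP' - y * hBC' - (1 - y) * hAB' + (1 - y) * hAC'
      - (1 - y) ^ 2 * hAC'
  rw [hk] at hp
  rw [hq2]
  field_simp at hp ⊢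
  linear_combination (2 * l - b) * hp

open Polynomial in
/-- The cubic has no root in the rational function field generated by a transcendental. -/
theorem cubic_ne_zero_of_mem_adjoin {q t : ℝ} (hq : Transcendental ℚ q)
    (ht : t ∈ IntermediateField.adjoin ℚ {q}) :
    2 * t ^ 3 + 3 * t ^ 2 - 4 * q ^ 2 * t - 1 ≠ 0 := by
  intro h
  obtain ⟨r₀, s₀, rfl⟩ := (IntermediateField.mem_adjoin_simple_iff ℚ t).1 ht
  have hs₀ : s₀ ≠ 0 := by
    rintro rfl
    simp at h
  obtain ⟨r, s, hrs, hreq⟩ : ∃ r s : ℚ[X], IsCoprime r s ∧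
      ∃ g : ℚ[X], g ≠ 0 ∧ r₀ = g * r ∧ s₀ = g * s := by
    have hg : gcd r₀ s₀ ≠ 0 := fun hg => hs₀ ((gcd_eq_zero_iff _ _).1 hg).2
    exact ⟨_, _, isCoprime_div_gcd_div_gcd hs₀, gcd r₀ s₀, hg,
      (EuclideanDomain.mul_div_cancel' hg (gcd_dvd_left _ _)).symm,
      (EuclideanDomain.mul_div_cancel' hg (gcd_dvd_right _ _)).symm⟩
  obtain ⟨g, hg, rfl, rfl⟩ := hreq
  have haeval {p : ℚ[X]} (hp : p ≠ 0) : aeval q p ≠ 0 := fun h0 => hq ⟨p, hp, h0⟩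
  have hs : s ≠ 0 := right_ne_zero_of_mul hs₀
  have hs' := haeval hs
  rw [map_mul, map_mul, mul_div_mul_left _ _ (haeval hg)] at h
  have hpoly : 2 * r ^ 3 + 3 * r ^ 2 * s - 4 * X ^ 2 * r * s ^ 2 - s ^ 3 = 0 := by
    by_contra hne
    apply haeval hne
    field_simp at h
    simp only [map_sub, map_add, map_mul, map_pow, map_ofNat, aeval_X]
    linear_combination h
  have hr : IsUnit r := by
    refine (hrs.pow_right (n := 3)).isUnit_of_dvd' dvd_rfl
      ⟨2 * r ^ 2 + 3 * r * s - 4 * X ^ 2 * s ^ 2, ?_⟩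
    linear_combination -hpoly
  have hsu : IsUnit s := by
    refine (hrs.symm.pow_right (n := 3)).isUnit_of_dvd' dvd_rfl
      ⟨C (1 / 2) * (-3 * r ^ 2 + 4 * X ^ 2 * r * s + s ^ 2), ?_⟩
    have h2 : (C (1 / 2) : ℚ[X]) * 2 = 1 := by
      rw [← C_ofNat, ← C_mul]
      norm_num
    linear_combination C (1 / 2) * hpoly - r ^ 3 * h2
  obtain ⟨c, hc, rfl⟩ := isUnit_iff.1 hr
  obtain ⟨d, hd, rfl⟩ := isUnit_iff.1 hsu
  have h0 := congrArg (eval 0) hpoly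
  have h1 := congrArg (eval 1) hpoly
  simp at h0 h1
  have : c * d ^ 2 = 0 := by linarith
  exact mul_ne_zero hc.ne_zero (pow_ne_zero 2 hd.ne_zero) this

open Polynomial in
/-- A monic cubic without roots in a field has no roots in a quadratic extension. -/
theorem aeval_ne_zero_of_finrank_eq_two {F E : Type*} [Field F] [Field E] [Algebra F E]
    (hE : Module.finrank F E = 2) {f : F[X]} (hf : f.Monic) (hdeg : f.natDegree = 3)
    (hroot : ∀ x : F, f.eval x ≠ 0) (y : E) : aeval y f ≠ 0 := by
  intro hy
  have : FiniteDimensional F E := Module.finite_of_finrank_pos (by omega)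
  have hirr : Irreducible f := by
    rw [hf.irreducible_iff_roots_eq_zero_of_degree_le_three (by omega) (by omega)]
    refine Multiset.eq_zero_of_forall_notMem fun x hx => hroot x ?_
    exact (mem_roots'.1 hx).2
  have hdvd := minpoly.degree_dvd (K := F) (x := y) (Algebra.IsIntegral.isIntegral y)
  rw [← minpoly.eq_of_irreducible_of_monic hirr hy hf, hdeg, hE] at hdvd
  omega

open Polynomial in
/-- The cubic acquires no root in a quadratic extension of subfields of `ℝ`. -/
theorem cubic_ne_zero_of_quadratic_step {q : ℝ} {F E : Subfield ℝ} (hle : F ≤ E)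
    (hq : q ∈ F)
    (hfin : letI : Algebra F E := (Subfield.inclusion hle).toAlgebra
      Module.finrank F E = 2)
    (hroot : ∀ t ∈ F, 2 * t ^ 3 + 3 * t ^ 2 - 4 * q ^ 2 * t - 1 ≠ 0) :
    ∀ t ∈ E, 2 * t ^ 3 + 3 * t ^ 2 - 4 * q ^ 2 * t - 1 ≠ 0 := by
  intro t ht h
  let : Algebra F E := (Subfield.inclusion hle).toAlgebra
  let q' : F := ⟨q, hq⟩
  let f : F[X] := X ^ 3 + (C (3 / 2) * X ^ 2 - C (2 * q' ^ 2) * X - C (1 / 2))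
  have hlow : (C (3 / 2) * X ^ 2 - C (2 * q' ^ 2) * X - C (1 / 2) : F[X]).degree < (3 : ℕ) := by
    refine lt_of_le_of_lt (b := (2 : WithBot ℕ)) ?_ (by norm_num)
    compute_degree
  have hf : f.Monic := monic_X_pow_add hlow
  have hdeg : f.natDegree = 3 := by
    refine natDegree_eq_of_degree_eq_some ?_
    rw [degree_add_eq_left_of_degree_lt (by rwa [degree_X_pow]), degree_X_pow]
  have h2 : ((2 : F) : ℝ) = 2 := rfl
  have h3 : ((3 : F) : ℝ) = 3 := rfl
  refine aeval_ne_zero_of_finrank_eq_two hfin hf hdeg (fun x hx => hroot x x.2 ?_) ⟨t, ht⟩ ?_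
  · have hx' := congrArg (Subtype.val) hx
    simp [f, q', h2, h3] at hx'
    linarith
  · apply Subtype.ext
    have hval (x : F) : ((algebraMap F E x : E) : ℝ) = x := rfl
    simp only [f, map_add, map_sub, map_pow, aeval_X, aeval_C, map_mul (aeval _),
      Subfield.coe_add, Subfield.coe_sub, Subfield.coe_mul, SubmonoidClass.coe_pow, hval]
    simp [q', h2, h3]
    linarith

open IntermediateField in
theorem stmt_11 (q : ℝ) (hq : Transcendental ℚ q)
    (A B C P : EuclideanSpace ℝ (Fin 2)) (l b : ℝ)
    (hcol : ¬ Collinear ℝ ({A, B, C} : Set (EuclideanSpace ℝ (Fin 2))))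
    (hAB : dist A B = l) (hAC : dist A C = l) (hBC : dist B C = b)
    (hAM : dist A (midpoint ℝ B C) = q)
    (hP : P ∈ segment ℝ A C) (hCP : dist C P = b * l / (b + l))
    (hBP : dist B P = 1) :
    ¬ ∃ (n : ℕ) (K : Fin (n + 1) → Subfield ℝ)
        (hle : ∀ i : Fin n, K i.castSucc ≤ K i.succ),
      K 0 = (ℚ⟮q⟯ : IntermediateField ℚ ℝ).toSubfield ∧
      (∀ i : Fin n,
        letI : Algebra (K i.castSucc) (K i.succ) :=
          (Subfield.inclusion (hle i)).toAlgebra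
        Module.finrank (K i.castSucc) (K i.succ) = 2) ∧
      l / b ∈ K (Fin.last n) := by
  rintro ⟨n, K, hle, hK0, hfin, hmem⟩
  have hBne : B ≠ C := by
    rintro rfl
    exact hcol (by simpa using collinear_pair ℝ A B)
  have hK (i : Fin (n + 1)) :
      q ∈ K i ∧ ∀ t ∈ K i, 2 * t ^ 3 + 3 * t ^ 2 - 4 * q ^ 2 * t - 1 ≠ 0 := by
    induction i using Fin.induction with
    | zero =>
      rw [hK0]
      exact ⟨mem_adjoin_simple_self ℚ q, fun t ht => cubic_ne_zero_of_mem_adjoin hq ht⟩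
    | succ i ih =>
      exact ⟨hle i ih.1, cubic_ne_zero_of_quadratic_step (hle i) ih.1 (hfin i) ih.2⟩
  exact (hK (Fin.last n)).2 _ hmem
    (isosceles_ratio_cubic hBne hAB hAC hBC hAM hP hCP hBP)
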